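/- arXiv:1512.07602 — 3 statements merged into one kernel-verified Lean document; each statement's English description precedes it below -/
import Mathlib

section
/- Assume the setup: T is a homeomorphism of a compact topological space X, V a Banach space, A a continuous linear cocycle over T with every A^n_x injective, and for some integer k ≥ 1 and constants K > 0, τ ∈ (0,1) one has max{c_{k+1}(A^n_x), c_{k+1}(A^n_{Tx})} ≤ K τ^n c_k(A^{n+1}_x) for all x ∈ X, n ≥ 1. Suppose further that for each x ∈ X and n ≥ 1 there are given splittings V = E_n(x) ⊕ F_n(x) = E_n'(x) ⊕ F_n'(x) into a k-dimensional and a closed k-codimensional subspace and a constant C_k > 1 such that: A^n_x E_n(x) = E_n'(x), A^n_x F_n(x) ⊆ F_n'(x), m(A^n_x|_{E_n(x)}) ≥ C_k^{-1} c_k(A^n_x), ‖A^n_x|_{F_n(x)}‖ ≤ C_k c_{k+1}(A^n_x), and ‖π_{E_n(x)//F_n(x)}‖ ≤ C_k, ‖π_{E_n'(x)//F_n'(x)}‖ ≤ C_k. Let 𝓔(x) := lim_{n→∞} E_n'(T^{-n} x), which exists in the Hausdorff metric d_H. Then the map x ↦ 𝓔(x) from X to the k-dimensional subspaces of V is continuous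 with respect to d_H. -/
/-!
For `n ≥ 1` put `G_n(x) = E'_n(T⁻ⁿ x)`, a `k`-dimensional subspace. The limit `𝓔` of `G_n` is
continuous because `G_n → 𝓔` uniformly and `G_n`, although it need not be continuous itself, has
oscillation at each point that tends to `0` as `n → ∞`.

Both facts rest on two observations.
* `exists_approx_proj`: if `P` is the projection onto `E'_n(x)` along `F'_n(x)`, then
  `‖P A w - A w‖ ≤ C (1 + C) c_{k+1}(A) ‖w‖` for every `w`, where `A = A^n_x`: the error is the
  image of the `F_n(x)`-component of `w`.
* `dHaus_le_of_near`: if `E` and `G` have the same finite dimension and a linear map sends `E`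
  into `G` and moves each `a ∈ E` by at most `δ ‖a‖`, with `δ ≤ 1/2`, then `d_H(E, G) ≤ 4 δ`. The
  equality of dimensions turns the one-sided estimate into a two-sided one.

Uniform convergence (`AdaptedSplitting.dHaus_comp_le`, `dHaus_limit_le`): an element of `G_{n+1}(x)` is `A^n_{Tz} (A_z v)` with
`z = T^{-(n+1)} x` and `v ∈ E_{n+1}(z)`. The gap hypothesis bounds `c_{k+1}(A^n_{Tz})` by
`K τⁿ c_k(A^{n+1}_z)`, and `c_k(A^{n+1}_z) ‖v‖ ≤ C ‖A^{n+1}_z v‖`, so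
`d_H(G_{n+1}(x), G_n(x)) = O(τⁿ)` uniformly in `x`; the geometric series is summed.

Small oscillation (`AdaptedSplitting.dHaus_nearby_le`): an element of `E'_n(x)` is `A^n_x u` with `u ∈ E_n(x)`. It is
compared with `A^n_y u`, which is nearly in `E'_n(y)`. The Gelfand number `c_k` is 1-Lipschitz in the
operator, `c_k(A^{n+1}_y) ≤ sup ‖A¹‖ · c_k(A^n_y)`, and `A^n_x` is bounded below on the
finite-dimensional `E_n(x)`, so the relative error is `O(τⁿ)` plus a term that vanishes as `y → x`.

The Hausdorff distance to an empty set is `0` by convention, so the points with `𝓔 x = ⊥`, which the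
convergence hypothesis does not exclude, satisfy the conclusion trivially.
-/

open Metric Filter MeasureTheory Topology

noncomputable section

section Defs

variable {V W : Type*} [NormedAddCommGroup V] [NormedSpace ℝ V]
  [NormedAddCommGroup W] [NormedSpace ℝ W]

/-- The operator norm of the restriction of `A` to the subspace `E`, `‖A|_E‖`. -/
noncomputable def restrNorm (A : V →L[ℝ] W) (E : Submodule ℝ V) : ℝ :=
  ‖A.comp E.subtypeL‖

/-- The minimal norm `m(A|_E) = inf {‖A v‖ : v ∈ E, ‖v‖ = 1}`. -/
noncomputable def minNorm (A : V →L[ℝ] W) (E : Submodule ℝ V) : ℝ :=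
  sInf {r : ℝ | ∃ v ∈ E, ‖v‖ = 1 ∧ r = ‖A v‖}

/-- `F` is a closed subspace of codimension `n`. -/
def ClosedCodim (F : Submodule ℝ V) (n : ℕ) : Prop :=
  IsClosed (F : Set V) ∧ FiniteDimensional ℝ (V ⧸ F) ∧ Module.finrank ℝ (V ⧸ F) = n

/-- The `k`-th Gelfand number of `A` (meaningful for `k ≥ 1`):
`c_k(A) = inf {‖A|_F‖ : F a closed subspace of codimension k - 1}`. -/
noncomputable def gelfand (k : ℕ) (A : V →L[ℝ] W) : ℝ :=
  sInf {r : ℝ | ∃ F : Submodule ℝ V, ClosedCodim F (k - 1) ∧ r = restrNorm A F}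

/-- The unit sphere of a subspace. -/
def subSphere (E : Submodule ℝ V) : Set V := {v : V | v ∈ E ∧ ‖v‖ = 1}

/-- Hausdorff distance between the unit spheres of two subspaces. -/
noncomputable def dHaus (E F : Submodule ℝ V) : ℝ :=
  Metric.hausdorffDist (subSphere E) (subSphere F)

/-- `π` is the (bounded) projection onto `E` parallel to `F`. -/
def IsProjOn (π : V →L[ℝ] V) (E F : Submodule ℝ V) : Prop :=
  (∀ v ∈ E, π v = v) ∧ (∀ v ∈ F, π v = 0)

open scoped Classical in
/-- The (unsigned) determinant `det(A|E)` of `A` restricted to a finite-dimensional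
subspace `E`, defined as the ratio of the induced (Haar) volume of the image `A B_E`
of the unit ball of `E` to that of the unit ball of `A E`; it equals `0` when `A|_E`
is not injective.  (The value of the ratio does not depend on the choice of linear
equivalence with `ℝ^k`, since any two such differ by a linear automorphism, which
rescales both volumes by the same factor.) -/
noncomputable def detOn (A : V →L[ℝ] W) (E : Submodule ℝ V) : ℝ :=
  if h : Nonempty ((↥(E.map A.toLinearMap)) ≃ₗ[ℝ] (Fin (Module.finrank ℝ ↥E) → ℝ)) then
    (volume (⇑h.some '' {w : ↥(E.map A.toLinearMap) | ∃ v ∈ E, ‖v‖ ≤ 1 ∧ A v = (w : W)})).toReal /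
      (volume (⇑h.some '' {w : ↥(E.map A.toLinearMap) | ‖(w : W)‖ ≤ 1})).toReal
  else 0

/-- `V_k(A)`: the maximal `k`-dimensional volume growth of `A`,
`V_k(A) = sup {det(A|E) : E ⊆ V a k-dimensional subspace}`. -/
noncomputable def volGrowth (k : ℕ) (A : V →L[ℝ] W) : ℝ :=
  sSup {r : ℝ | ∃ E : Submodule ℝ V, FiniteDimensional ℝ ↥E ∧ Module.finrank ℝ ↥E = k ∧
    r = detOn A E}

/-- `V_k(A|_G)`: maximal volume growth among `k`-dimensional subspaces of `G`. -/
noncomputable def volGrowthOn (k : ℕ) (A : V →L[ℝ] W) (G : Submodule ℝ V) : ℝ :=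
  sSup {r : ℝ | ∃ E : Submodule ℝ V, E ≤ G ∧ FiniteDimensional ℝ ↥E ∧
    Module.finrank ℝ ↥E = k ∧ r = detOn A E}

/-- `A : X × ℕ → L(V)` is a linear cocycle over `T`. -/
def IsCocycle {X : Type*} (T : X → X) (A : X → ℕ → (V →L[ℝ] V)) : Prop :=
  (∀ x, A x 0 = 1) ∧ ∀ x n m, A x (n + m) = (A (T^[m] x) n).comp (A x m)

/-- Continuity of a subspace-valued map with respect to the Hausdorff distance
between unit spheres. -/
def SubContinuous {X : Type*} [TopologicalSpace X] (𝓔 : X → Submodule ℝ V) : Prop :=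
  ∀ x : X, ∀ ε > (0 : ℝ), ∀ᶠ y in nhds x, dHaus (𝓔 x) (𝓔 y) < ε

end Defs

end
/-! ### Hausdorff distance between unit spheres -/

section Spheres

variable {V : Type*} [NormedAddCommGroup V] [NormedSpace ℝ V]

lemma subSphere_bounded (E : Submodule ℝ V) : Bornology.IsBounded (subSphere E) :=
  (Metric.isBounded_sphere (x := (0 : V)) (r := 1)).subset fun v hv => by simpa using hv.2

lemma subSphere_nonempty {E : Submodule ℝ V} (h : E ≠ ⊥) : (subSphere E).Nonempty := by
  obtain ⟨v, hv, hv0⟩ := E.exists_mem_ne_zero_of_ne_bot h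
  exact ⟨‖v‖⁻¹ • v, E.smul_mem _ hv, norm_smul_inv_norm (𝕜 := ℝ) hv0⟩

lemma subSphere_bot : subSphere (⊥ : Submodule ℝ V) = ∅ := by
  ext v
  simp only [subSphere, Submodule.mem_bot, Set.mem_ofPred_eq, Set.mem_empty_iff_false, iff_false]
  rintro ⟨rfl, h⟩
  simp at h

/-- Nonzero `E` and `F` have unit spheres at finite extended distance, which rules out the junk
value of `hausdorffDist` in the first summand. -/
lemma dHaus_triangle {E F : Submodule ℝ V} (G : Submodule ℝ V) (hE : E ≠ ⊥) (hF : F ≠ ⊥) :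
    dHaus E G ≤ dHaus E F + dHaus F G :=
  Metric.hausdorffDist_triangle (Metric.hausdorffEDist_ne_top_of_nonempty_of_bounded
    (subSphere_nonempty hE) (subSphere_nonempty hF) (subSphere_bounded _) (subSphere_bounded _))

lemma dHaus_comm (E F : Submodule ℝ V) : dHaus E F = dHaus F E := Metric.hausdorffDist_comm

lemma exists_unit_near {G : Submodule ℝ V} {a b : V} {δ : ℝ} (ha : ‖a‖ = 1) (hb : b ∈ G)
    (hδ : δ < 1) (hab : ‖b - a‖ ≤ δ) : ∃ c ∈ subSphere G, dist a c ≤ 2 * δ := by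
  have h1 : |‖b‖ - ‖a‖| ≤ δ := (abs_norm_sub_norm_le b a).trans hab
  rw [ha, abs_le] at h1
  have hb0 : b ≠ 0 := by
    rintro rfl
    simp at h1
    linarith
  have hbpos : 0 < ‖b‖ := norm_pos_iff.2 hb0
  refine ⟨‖b‖⁻¹ • b, ⟨G.smul_mem _ hb, norm_smul_inv_norm (𝕜 := ℝ) hb0⟩, ?_⟩
  have h2 : ‖b - ‖b‖⁻¹ • b‖ ≤ δ := by
    have : b - ‖b‖⁻¹ • b = (1 - ‖b‖⁻¹) • b := by rw [sub_smul, one_smul]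
    rw [this, norm_smul, Real.norm_eq_abs, ← abs_of_pos hbpos, ← abs_mul, abs_of_pos hbpos,
      sub_mul, inv_mul_cancel₀ hbpos.ne', one_mul, abs_le]
    exact h1
  calc dist a (‖b‖⁻¹ • b) ≤ dist a b + dist b (‖b‖⁻¹ • b) := dist_triangle _ _ _
    _ ≤ δ + δ := by
        rw [dist_comm a b, dist_eq_norm, dist_eq_norm]
        exact add_le_add hab h2
    _ = 2 * δ := by ring

/-- A linear map `E → G` that is close to the identity is injective, hence bijective by equality of
dimensions, so each subspace lies near the other. -/
lemma dHaus_le_of_near {E G : Submodule ℝ V} [FiniteDimensional ℝ E] [FiniteDimensional ℝ G]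
    (hdim : Module.finrank ℝ E = Module.finrank ℝ G) (P : V →L[ℝ] V) {δ : ℝ}
    (hδ0 : 0 ≤ δ) (hδ : δ ≤ 1 / 2) (hPG : ∀ a ∈ E, P a ∈ G)
    (hP : ∀ a ∈ E, ‖P a - a‖ ≤ δ * ‖a‖) : dHaus E G ≤ 4 * δ := by
  have hhalf : ∀ a ∈ E, ‖a‖ ≤ 2 * ‖P a‖ := fun a ha => by
    have h1 := norm_sub_norm_le a (P a)
    rw [norm_sub_rev] at h1
    nlinarith [hP a ha, norm_nonneg a]
  let Q : E →ₗ[ℝ] G := P.toLinearMap.restrict hPG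
  have hQ : ∀ a : E, (Q a : V) = P a := fun a => rfl
  have hinj : Function.Injective Q := by
    rw [← LinearMap.ker_eq_bot, LinearMap.ker_eq_bot']
    intro a h
    have h1 := hhalf a a.2
    rw [← hQ, h] at h1
    simpa using h1
  have hsurj : Function.Surjective Q :=
    (LinearMap.injective_iff_surjective_of_finrank_eq_finrank hdim).1 hinj
  refine Metric.hausdorffDist_le_of_mem_dist (by positivity) ?_ ?_
  · rintro a ⟨haE, ha⟩
    have h := hP a haE
    rw [ha, mul_one] at h
    obtain ⟨c, hc, hd⟩ := exists_unit_near ha (hPG a haE) (by linarith) h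
    exact ⟨c, hc, by linarith⟩
  · rintro b ⟨hbG, hb⟩
    obtain ⟨a, ha⟩ := hsurj ⟨b, hbG⟩
    have hab : P a = b := by rw [← hQ, ha]
    have h := hP a a.2
    have h2 := hhalf a a.2
    rw [hab] at h h2
    rw [hb] at h2
    rcases hδ.lt_or_eq with hlt | rfl
    · obtain ⟨c, hc, hd⟩ := exists_unit_near (δ := 2 * δ) hb a.2 (by linarith)
        (by rw [norm_sub_rev]; nlinarith)
      exact ⟨c, hc, by linarith⟩
    -- If `δ = 1 / 2`, any unit vector of `E` will do, as `4 * δ = 2`.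
    · have ha0 : (a : V) ≠ 0 := by
        intro h0
        rw [h0, map_zero] at hab
        rw [← hab] at hb
        simp at hb
      have hn : ‖‖(a : V)‖⁻¹ • (a : V)‖ = 1 := norm_smul_inv_norm (𝕜 := ℝ) ha0
      refine ⟨‖(a : V)‖⁻¹ • (a : V), ⟨E.smul_mem _ a.2, hn⟩, ?_⟩
      rw [dist_eq_norm]
      refine (norm_sub_le _ _).trans ?_
      rw [hb, hn]
      norm_num

end Spheres

/-! ### Gelfand numbers, minimal norms and restrictions -/

section Gelfand

variable {V W : Type*} [NormedAddCommGroup V] [NormedSpace ℝ V]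
  [NormedAddCommGroup W] [NormedSpace ℝ W]

lemma restrNorm_nonneg (A : V →L[ℝ] W) (F : Submodule ℝ V) : 0 ≤ restrNorm A F :=
  norm_nonneg (A.comp F.subtypeL)

lemma gelfand_nonneg (k : ℕ) (A : V →L[ℝ] W) : 0 ≤ gelfand k A := by
  apply Real.sInf_nonneg
  rintro r ⟨F, -, rfl⟩
  exact restrNorm_nonneg A F

lemma gelfand_le_restrNorm {k : ℕ} (A : V →L[ℝ] W) {F : Submodule ℝ V}
    (hF : ClosedCodim F (k - 1)) : gelfand k A ≤ restrNorm A F := by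
  refine csInf_le ⟨0, ?_⟩ ⟨F, hF, rfl⟩
  rintro r ⟨F, -, rfl⟩
  exact restrNorm_nonneg A F

/-- If there is no closed subspace of codimension `k - 1`, both Gelfand numbers take the junk
value `0`, and the inequality still holds. -/
lemma gelfand_comp_le (k : ℕ) (B : W →L[ℝ] W) (A : V →L[ℝ] W) {M : ℝ} (hM : 0 < M) (hB : ‖B‖ ≤ M) :
    gelfand k (B.comp A) ≤ M * gelfand k A := by
  by_cases hne : ∃ F : Submodule ℝ V, ClosedCodim F (k - 1)
  · rw [← div_le_iff₀' hM]
    obtain ⟨F₀, hF₀⟩ := hne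
    refine le_csInf ⟨_, F₀, hF₀, rfl⟩ ?_
    rintro r ⟨F, hF, rfl⟩
    rw [div_le_iff₀' hM]
    refine (gelfand_le_restrNorm _ hF).trans ?_
    unfold restrNorm
    rw [ContinuousLinearMap.comp_assoc]
    exact (ContinuousLinearMap.opNorm_comp_le _ _).trans
      (mul_le_mul_of_nonneg_right hB (norm_nonneg _))
  · push Not at hne
    simp [gelfand, hne]

/-- Gelfand numbers are 1-Lipschitz in the operator norm. -/
lemma gelfand_le_add (k : ℕ) (A B : V →L[ℝ] W) : gelfand k B ≤ gelfand k A + ‖A - B‖ := by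
  by_cases hne : ∃ F : Submodule ℝ V, ClosedCodim F (k - 1)
  · rw [← sub_le_iff_le_add]
    obtain ⟨F₀, hF₀⟩ := hne
    refine le_csInf ⟨_, F₀, hF₀, rfl⟩ ?_
    rintro r ⟨F, hF, rfl⟩
    rw [sub_le_iff_le_add]
    refine (gelfand_le_restrNorm _ hF).trans ?_
    refine ContinuousLinearMap.opNorm_le_bound _ (by unfold restrNorm; positivity) fun v => ?_
    have h1 : B v = A v - (A - B) v := by simp
    have h2 : ‖A v‖ ≤ restrNorm A F * ‖v‖ := (A.comp F.subtypeL).le_opNorm v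
    have h3 : ‖(A - B) v‖ ≤ ‖A - B‖ * ‖v‖ := (A - B).le_opNorm v
    change ‖B v‖ ≤ _
    rw [h1, add_mul]
    exact (norm_sub_le _ _).trans (add_le_add h2 h3)
  · push Not at hne
    simp [gelfand, hne]

lemma minNorm_mul_le (A : V →L[ℝ] W) {E : Submodule ℝ V} {v : V} (hv : v ∈ E) :
    minNorm A E * ‖v‖ ≤ ‖A v‖ := by
  rcases eq_or_ne v 0 with rfl | h0
  · simp
  have hpos : 0 < ‖v‖ := norm_pos_iff.2 h0
  rw [← le_div_iff₀ hpos]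
  refine csInf_le ⟨0, ?_⟩
    ⟨‖v‖⁻¹ • v, E.smul_mem _ hv, norm_smul_inv_norm (𝕜 := ℝ) h0, ?_⟩
  · rintro r ⟨w, -, -, rfl⟩
    exact norm_nonneg _
  · rw [map_smul, norm_smul, norm_inv, norm_norm, div_eq_inv_mul]

/-- When `A` maps a splitting `E ⊕ F` into `E' ⊕ F'` and contracts `F` strongly, the projection onto
`E'` moves points of the range of `A` very little. -/
lemma exists_approx_proj (A : V →L[ℝ] V) {E F E' F' : Submodule ℝ V} {C c : ℝ}
    (hsplit : IsCompl E F) (hmapE : E.map A.toLinearMap = E') (hmapF : F.map A.toLinearMap ≤ F')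
    (hrestr : restrNorm A F ≤ C * c) (hsplit' : IsCompl E' F')
    (hproj : ∃ π, IsProjOn π E F ∧ ‖π‖ ≤ C) (hproj' : ∃ π, IsProjOn π E' F' ∧ ‖π‖ ≤ C) :
    ∃ P : V →L[ℝ] V, ‖P‖ ≤ C ∧ (∀ v, P v ∈ E') ∧
      ∀ w, ‖P (A w) - A w‖ ≤ C * (1 + C) * c * ‖w‖ := by
  obtain ⟨π, ⟨hπE, hπF⟩, hπ⟩ := hproj
  obtain ⟨P, ⟨hPE, hPF⟩, hP⟩ := hproj'
  refine ⟨P, hP, fun v => ?_, fun w => ?_⟩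
  · obtain ⟨e, he, f, hf, rfl⟩ := Submodule.mem_sup.1
      (show v ∈ E' ⊔ F' by rw [hsplit'.sup_eq_top]; trivial)
    rw [map_add, hPE e he, hPF f hf, add_zero]
    exact he
  · obtain ⟨e, he, f, hf, rfl⟩ := Submodule.mem_sup.1
      (show w ∈ E ⊔ F by rw [hsplit.sup_eq_top]; trivial)
    have hf' : f = (e + f) - π (e + f) := by
      rw [map_add, hπE e he, hπF f hf]
      abel
    have h1 : P (A e) = A e := hPE _ (hmapE ▸ Submodule.mem_map_of_mem he)
    have h2 : P (A f) = 0 := hPF _ (hmapF (Submodule.mem_map_of_mem hf))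
    have h3 : P (A (e + f)) - A (e + f) = - A f := by
      rw [map_add, map_add, h1, h2]
      abel
    have h4 : ‖A f‖ ≤ restrNorm A F * ‖f‖ := (A.comp F.subtypeL).le_opNorm ⟨f, hf⟩
    have h5 : ‖f‖ ≤ (1 + C) * ‖e + f‖ := by
      have h6 := norm_sub_le (e + f) (π (e + f))
      rw [← hf'] at h6
      have h7 := π.le_of_opNorm_le hπ (e + f)
      linarith
    rw [h3, norm_neg]
    calc ‖A f‖ ≤ restrNorm A F * ‖f‖ := h4
      _ ≤ C * c * ((1 + C) * ‖e + f‖) :=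
          mul_le_mul hrestr h5 (norm_nonneg _) ((restrNorm_nonneg A F).trans hrestr)
      _ = C * (1 + C) * c * ‖e + f‖ := by ring

end Gelfand

/-! ### Comparison of the approximating subspaces -/

section Comparison

variable {V : Type*} [NormedAddCommGroup V] [NormedSpace ℝ V]

/-- The data attached to a single operator `A`: compatible splittings `E ⊕ F`, `E' ⊕ F'`, adapted
to the Gelfand numbers `c_k(A)` and `c_{k+1}(A)` up to the constant `C`. -/
structure AdaptedSplitting (k : ℕ) (C : ℝ) (A : V →L[ℝ] V) (E F E' F' : Submodule ℝ V) : Prop where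
  inj : Function.Injective A
  finDim : FiniteDimensional ℝ E
  finrank_eq : Module.finrank ℝ E = k
  compl : IsCompl E F
  compl' : IsCompl E' F'
  mapE : E.map A.toLinearMap = E'
  mapF : F.map A.toLinearMap ≤ F'
  le_minNorm : C⁻¹ * gelfand k A ≤ minNorm A E
  restrNorm_le : restrNorm A F ≤ C * gelfand (k + 1) A
  proj : ∃ π, IsProjOn π E F ∧ ‖π‖ ≤ C
  proj' : ∃ π, IsProjOn π E' F' ∧ ‖π‖ ≤ C

namespace AdaptedSplitting

variable {k : ℕ} {C : ℝ} {A B : V →L[ℝ] V} {E F E' F' G H G' H' : Submodule ℝ V}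

lemma finDim' (h : AdaptedSplitting k C A E F E' F') : FiniteDimensional ℝ E' := by
  have := h.finDim
  rw [← h.mapE]
  infer_instance

lemma finrank_eq' (h : AdaptedSplitting k C A E F E' F') : Module.finrank ℝ E' = k := by
  rw [← h.mapE, ← h.finrank_eq]
  exact (Submodule.equivMapOfInjective A.toLinearMap h.inj E).finrank_eq.symm

lemma ne_bot (h : AdaptedSplitting k C A E F E' F') (hk : 1 ≤ k) : E' ≠ ⊥ := by
  rintro rfl
  have := h.finrank_eq'
  rw [finrank_bot] at this
  omega

lemma gelfand_mul_le (h : AdaptedSplitting k C A E F E' F') (hC : 0 < C) {v : V} (hv : v ∈ E) :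
    gelfand k A * ‖v‖ ≤ C * ‖A v‖ := by
  have h1 := (mul_le_mul_of_nonneg_right h.le_minNorm (norm_nonneg v)).trans (minNorm_mul_le A hv)
  calc gelfand k A * ‖v‖ = C * (C⁻¹ * gelfand k A * ‖v‖) := by field_simp
    _ ≤ C * ‖A v‖ := mul_le_mul_of_nonneg_left h1 hC.le

/-- One step of the cocycle: `A = B ∘ S`, with adapted splitting `E ⊕ F`, and `B`, with adapted
splitting `G ⊕ H`, have nearby image subspaces if `c_{k+1}(B)` is much smaller than `c_k(A)`. -/
lemma dHaus_comp_le {S : V →L[ℝ] V} (hA : AdaptedSplitting k C A E F E' F')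
    (hB : AdaptedSplitting k C B G H G' H') (hC : 1 < C) (hAB : A = B.comp S) {M η : ℝ}
    (hM : 0 < M) (hS : ‖S‖ ≤ M) (hη : 0 ≤ η) (hgap : gelfand (k + 1) B ≤ η * gelfand k A)
    (hsmall : C * (1 + C) * M * C * η ≤ 1 / 2) :
    dHaus E' G' ≤ 4 * (C * (1 + C) * M * C * η) := by
  have hC0 : 0 < C := by linarith
  obtain ⟨P, -, hPG, hP⟩ := exists_approx_proj B hB.compl hB.mapE hB.mapF hB.restrNorm_le
    hB.compl' hB.proj hB.proj'
  have := hA.finDim'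
  have := hB.finDim'
  refine dHaus_le_of_near (by rw [hA.finrank_eq', hB.finrank_eq']) P (by positivity) hsmall
    (fun a _ => hPG a) fun a ha => ?_
  rw [← hA.mapE] at ha
  obtain ⟨v, hv, rfl⟩ := ha
  have h1 := hA.gelfand_mul_le hC0 hv
  have h2 : A v = B (S v) := by rw [hAB]; rfl
  have h3 : ‖S v‖ ≤ M * ‖v‖ := S.le_of_opNorm_le hS v
  change ‖P (A v) - A v‖ ≤ _ * ‖A v‖
  calc ‖P (A v) - A v‖ ≤ C * (1 + C) * gelfand (k + 1) B * ‖S v‖ := by rw [h2]; exact hP _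
    _ ≤ C * (1 + C) * (η * gelfand k A) * (M * ‖v‖) := by
        have := gelfand_nonneg k A
        gcongr
    _ = C * (1 + C) * M * η * (gelfand k A * ‖v‖) := by ring
    _ ≤ C * (1 + C) * M * η * (C * ‖A v‖) := by gcongr
    _ = C * (1 + C) * M * C * η * ‖A v‖ := by ring

/-- Two nearby operators with a strong gap have nearby image subspaces. Here `μ` is a lower bound of
`A` on `E`, and the operators are `s μ`-close. -/
lemma dHaus_nearby_le (hA : AdaptedSplitting k C A E F E' F')
    (hB : AdaptedSplitting k C B G H G' H') (hC : 1 < C) {μ s η : ℝ}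
    (hμ : ∀ u ∈ E, μ * ‖u‖ ≤ ‖A u‖) (hs : 0 ≤ s) (hAB : ‖A - B‖ ≤ s * μ)
    (hη : 0 ≤ η) (hgap : gelfand (k + 1) B ≤ η * gelfand k B)
    (hsmall : C * (1 + C) * η * (C + s) + (1 + C) * s ≤ 1 / 2) :
    dHaus E' G' ≤ 4 * (C * (1 + C) * η * (C + s) + (1 + C) * s) := by
  have hC0 : 0 < C := by linarith
  obtain ⟨P, hPC, hPG, hP⟩ := exists_approx_proj B hB.compl hB.mapE hB.mapF hB.restrNorm_le
    hB.compl' hB.proj hB.proj'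
  have := hA.finDim'
  have := hB.finDim'
  refine dHaus_le_of_near (by rw [hA.finrank_eq', hB.finrank_eq']) P (by positivity) hsmall
    (fun a _ => hPG a) fun a ha => ?_
  rw [← hA.mapE] at ha
  obtain ⟨u, hu, rfl⟩ := ha
  change ‖P (A u) - A u‖ ≤ _ * ‖A u‖
  have h1 := hA.gelfand_mul_le hC0 hu
  have h2 : ‖A - B‖ * ‖u‖ ≤ s * ‖A u‖ := by
    calc ‖A - B‖ * ‖u‖ ≤ s * μ * ‖u‖ := by gcongr
      _ = s * (μ * ‖u‖) := by ring
      _ ≤ s * ‖A u‖ := mul_le_mul_of_nonneg_left (hμ u hu) hs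
  have h3 : ‖(A - B) u‖ ≤ s * ‖A u‖ := ((A - B).le_opNorm u).trans h2
  have h4 : P (A u) - A u = (P (B u) - B u) + (P ((A - B) u) - (A - B) u) := by
    simp only [sub_apply, map_sub]
    abel
  have h5 : ‖P ((A - B) u) - (A - B) u‖ ≤ (1 + C) * (s * ‖A u‖) := by
    have h6 := norm_sub_le (P ((A - B) u)) ((A - B) u)
    have h7 := P.le_of_opNorm_le hPC ((A - B) u)
    nlinarith
  have h8 : ‖P (B u) - B u‖ ≤ C * (1 + C) * η * ((C + s) * ‖A u‖) := by
    calc ‖P (B u) - B u‖ ≤ C * (1 + C) * gelfand (k + 1) B * ‖u‖ := hP u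
      _ ≤ C * (1 + C) * (η * (gelfand k A + ‖A - B‖)) * ‖u‖ := by
          gcongr
          exact hgap.trans (mul_le_mul_of_nonneg_left (gelfand_le_add k A B) hη)
      _ = C * (1 + C) * η * (gelfand k A * ‖u‖ + ‖A - B‖ * ‖u‖) := by ring
      _ ≤ C * (1 + C) * η * (C * ‖A u‖ + s * ‖A u‖) := by gcongr
      _ = C * (1 + C) * η * ((C + s) * ‖A u‖) := by ring
  rw [h4]
  refine (norm_add_le _ _).trans ((add_le_add h8 h5).trans (le_of_eq ?_))
  ring

lemma exists_lower_bound (h : AdaptedSplitting k C A E F E' F') :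
    ∃ μ > 0, ∀ u ∈ E, μ * ‖u‖ ≤ ‖A u‖ := by
  have := h.finDim
  obtain ⟨K, hK, hanti⟩ := (A.toLinearMap.comp E.subtype).exists_antilipschitzWith
    (LinearMap.ker_eq_bot.2 (h.inj.comp Subtype.val_injective))
  have hK' : (0 : ℝ) < K := hK
  refine ⟨(K : ℝ)⁻¹, inv_pos.2 hK', fun u hu => ?_⟩
  have h1 := hanti.le_mul_dist ⟨u, hu⟩ 0
  rw [dist_zero_right, map_zero, dist_zero_right] at h1
  rw [inv_mul_le_iff₀ hK']
  exact h1

end AdaptedSplitting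

/-- A sequence of nonzero subspaces with geometrically small steps is geometrically close to its
limit. -/
lemma dHaus_limit_le {G : ℕ → Submodule ℝ V} {L : Submodule ℝ V} {D τ : ℝ} (hτ0 : 0 < τ)
    (hτ1 : τ < 1) (hD : 0 ≤ D) {N : ℕ} (hG : ∀ n ≥ N, G n ≠ ⊥)
    (hstep : ∀ n ≥ N, dHaus (G (n + 1)) (G n) ≤ D * τ ^ n)
    (hlim : Tendsto (fun n => dHaus (G n) L) atTop (𝓝 0)) :
    ∀ n ≥ N, dHaus (G n) L ≤ D / (1 - τ) * τ ^ n := by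
  intro n hn
  have hτ : 0 < 1 - τ := by linarith
  have hsum : ∀ m, dHaus (G n) (G (n + m)) ≤ D / (1 - τ) * (τ ^ n - τ ^ (n + m)) := by
    intro m
    induction m with
    | zero => simp [dHaus, Metric.hausdorffDist_self_zero]
    | succ m ih =>
      have h1 := dHaus_triangle (G (n + (m + 1))) (hG n hn) (hG (n + m) (by omega))
      have h2 := hstep (n + m) (by omega)
      rw [dHaus_comm] at h2
      have h3 : D / (1 - τ) * (τ ^ n - τ ^ (n + m)) + D * τ ^ (n + m)
          = D / (1 - τ) * (τ ^ n - τ ^ (n + (m + 1))) := by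
        rw [← add_assoc, pow_succ τ (n + m)]
        field_simp
        ring
      rw [← h3]
      exact h1.trans (add_le_add ih h2)
  have hbound : ∀ m, dHaus (G n) L ≤ D / (1 - τ) * τ ^ n + dHaus (G (m + n)) L := by
    intro m
    have h1 := dHaus_triangle L (hG n hn) (hG (n + m) (by omega))
    have h2 : D / (1 - τ) * (τ ^ n - τ ^ (n + m)) ≤ D / (1 - τ) * τ ^ n := by
      have : 0 ≤ τ ^ (n + m) := by positivity
      gcongr
      linarith
    rw [add_comm m n]
    linarith [hsum m]
  have hlim' : Tendsto (fun m => D / (1 - τ) * τ ^ n + dHaus (G (m + n)) L) atTop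
      (𝓝 (D / (1 - τ) * τ ^ n + 0)) :=
    tendsto_const_nhds.add ((tendsto_add_atTop_iff_nat n).2 hlim)
  rw [add_zero] at hlim'
  exact ge_of_tendsto' hlim' hbound

end Comparison

lemma continuous_cocycle {X V : Type*} [TopologicalSpace X] [NormedAddCommGroup V]
    [NormedSpace ℝ V] {T : X → X} (hT : Continuous T) {A : X → ℕ → (V →L[ℝ] V)}
    (hcoc : IsCocycle T A) (hcont : Continuous fun x => A x 1) (n : ℕ) :
    Continuous fun x => A x n := by
  induction n with
  | zero => simpa only [hcoc.1] using continuous_const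
  | succ n ih =>
    have h : (fun x => A x (n + 1)) = fun x => (A (T^[n] x) 1).comp (A x n) := by
      ext1 x
      rw [add_comm, hcoc.2]
    rw [h]
    exact (hcont.comp (hT.iterate n)).clm_comp ih

/-- **Lemma 3.3 (continuity of the upper subspace).** -/
theorem upper_subspace_continuous
    {X V : Type*} [TopologicalSpace X] [CompactSpace X]
    [NormedAddCommGroup V] [NormedSpace ℝ V] [CompleteSpace V]
    (T : X ≃ₜ X) (A : X → ℕ → (V →L[ℝ] V))
    (hcoc : IsCocycle (⇑T) A)
    (hcont : Continuous fun x => A x 1)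
    (hinj : ∀ x n, Function.Injective (A x n))
    (k : ℕ) (hk : 1 ≤ k) (K τ : ℝ) (hK : 0 < K) (hτ : τ ∈ Set.Ioo (0:ℝ) 1)
    (hgap : ∀ x : X, ∀ n : ℕ, 1 ≤ n →
      max (gelfand (k+1) (A x n)) (gelfand (k+1) (A (T x) n)) ≤
        K * τ ^ n * gelfand k (A x (n+1)))
    (E F E' F' : X → ℕ → Submodule ℝ V) (Ck : ℝ) (hCk : 1 < Ck)
    (hEdim : ∀ x : X, ∀ n : ℕ, 1 ≤ n →
      FiniteDimensional ℝ ↥(E x n) ∧ Module.finrank ℝ ↥(E x n) = k)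
    (hFcodim : ∀ x : X, ∀ n : ℕ, 1 ≤ n → ClosedCodim (F x n) k)
    (hF'codim : ∀ x : X, ∀ n : ℕ, 1 ≤ n → ClosedCodim (F' x n) k)
    (hsplit : ∀ x : X, ∀ n : ℕ, 1 ≤ n →
      IsCompl (E x n) (F x n) ∧ IsCompl (E' x n) (F' x n))
    (hmapE : ∀ x : X, ∀ n : ℕ, 1 ≤ n → (E x n).map (A x n).toLinearMap = E' x n)
    (hmapF : ∀ x : X, ∀ n : ℕ, 1 ≤ n → (F x n).map (A x n).toLinearMap ≤ F' x n)
    (hmin : ∀ x : X, ∀ n : ℕ, 1 ≤ n →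
      Ck⁻¹ * gelfand k (A x n) ≤ minNorm (A x n) (E x n))
    (hrestr : ∀ x : X, ∀ n : ℕ, 1 ≤ n →
      restrNorm (A x n) (F x n) ≤ Ck * gelfand (k+1) (A x n))
    (hproj : ∀ x : X, ∀ n : ℕ, 1 ≤ n →
      (∃ π, IsProjOn π (E x n) (F x n) ∧ ‖π‖ ≤ Ck) ∧
      (∃ π', IsProjOn π' (E' x n) (F' x n) ∧ ‖π'‖ ≤ Ck))
    (𝓔 : X → Submodule ℝ V)
    (hlim : ∀ x : X, Filter.Tendsto
      (fun n : ℕ => dHaus (E' ((⇑T.symm)^[n] x) n) (𝓔 x)) Filter.atTop (nhds 0))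
    :
    SubContinuous 𝓔 := by
  obtain ⟨hτ0, hτ1⟩ := hτ
  have hC0 : 0 < Ck := by linarith
  have hS : ∀ x n, 1 ≤ n → AdaptedSplitting k Ck (A x n) (E x n) (F x n) (E' x n) (F' x n) :=
    fun x n hn => ⟨hinj x n, (hEdim x n hn).1, (hEdim x n hn).2, (hsplit x n hn).1,
      (hsplit x n hn).2, hmapE x n hn, hmapF x n hn, hmin x n hn, hrestr x n hn,
      (hproj x n hn).1, (hproj x n hn).2⟩
  obtain ⟨M, hM0, hM⟩ : ∃ M > 0, ∀ x, ‖A x 1‖ ≤ M := by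
    obtain ⟨M, hM⟩ := isCompact_univ.exists_bound_of_continuousOn hcont.continuousOn
    exact ⟨max M 1, by positivity, fun x => (hM x trivial).trans (le_max_left _ _)⟩
  -- One further step of the cocycle multiplies `c_k` by at most `M`, so the gap hypothesis also
  -- compares the two Gelfand numbers of the same iterate.
  have hgap' : ∀ x n, 1 ≤ n →
      gelfand (k + 1) (A x n) ≤ K * M * τ ^ n * gelfand k (A x n) := fun x n hn => by
    have h1 := (le_max_left _ _).trans (hgap x n hn)
    have h2 : gelfand k (A x (n + 1)) ≤ M * gelfand k (A x n) := by
      rw [add_comm n 1, hcoc.2]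
      exact gelfand_comp_le k _ _ hM0 (hM _)
    calc _ ≤ K * τ ^ n * gelfand k (A x (n + 1)) := h1
      _ ≤ K * τ ^ n * (M * gelfand k (A x n)) := by gcongr
      _ = _ := by ring
  have hpow : ∀ c : ℝ, Tendsto (fun n : ℕ => c * τ ^ n) atTop (𝓝 0) := fun c => by
    simpa using (tendsto_pow_atTop_nhds_zero_of_lt_one hτ0.le hτ1).const_mul c
  set D : ℝ := Ck * (1 + Ck) * M * Ck * K with hD
  have hD0 : 0 < D := by positivity
  obtain ⟨N, hN⟩ := eventually_atTop.1 ((hpow D).eventually_le_const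
    (show (0 : ℝ) < 1 / 2 by norm_num))
  have hstep : ∀ x, ∀ n ≥ max N 1, dHaus (E' ((⇑T.symm)^[n + 1] x) (n + 1))
      (E' ((⇑T.symm)^[n] x) n) ≤ 4 * D * τ ^ n := fun x n hn => by
    have hnN : N ≤ n := (le_max_left _ _).trans hn
    have hn1 : 1 ≤ n := (le_max_right _ _).trans hn
    have hz : (⇑T.symm)^[n] x = T ((⇑T.symm)^[n + 1] x) := by
      rw [Function.iterate_succ_apply', T.apply_symm_apply]
    rw [hz]
    generalize (⇑T.symm)^[n + 1] x = z
    have hcomp : A z (n + 1) = (A (T z) n).comp (A z 1) := hcoc.2 z n 1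
    have hDn : Ck * (1 + Ck) * M * Ck * (K * τ ^ n) = D * τ ^ n := by rw [hD]; ring
    have h := (hS z (n + 1) (by omega)).dHaus_comp_le (hS (T z) n hn1) hCk hcomp hM0 (hM z)
      (η := K * τ ^ n) (by positivity) ((le_max_right _ _).trans (hgap z n hn1))
      (by rw [hDn]; exact hN n hnN)
    rwa [hDn, ← mul_assoc] at h
  have hunif : ∀ x, ∀ n ≥ max N 1,
      dHaus (E' ((⇑T.symm)^[n] x) n) (𝓔 x) ≤ 4 * D / (1 - τ) * τ ^ n := fun x =>
    dHaus_limit_le (G := fun n => E' ((⇑T.symm)^[n] x) n) hτ0 hτ1 (by positivity)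
      (fun n hn => (hS _ n ((le_max_right _ _).trans hn)).ne_bot hk) (hstep x) (hlim x)
  intro x ε hε
  -- `η` is the target relative error; the factor `4` comes from `dHaus_le_of_near`.
  obtain ⟨η, hη0, hη, hηε⟩ : ∃ η > 0, η ≤ 1 / 2 ∧ 4 * η ≤ ε / 4 :=
    ⟨min (1 / 2) (ε / 16), by positivity, min_le_left _ _, by
      linarith [min_le_right (1 / 2) (ε / 16)]⟩
  obtain ⟨s, hs0, hs1, hs⟩ : ∃ s > 0, s ≤ 1 ∧ (1 + Ck) * s ≤ η / 2 := by
    refine ⟨min 1 (η / (2 * (1 + Ck))), by positivity, min_le_left _ _, ?_⟩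
    calc (1 + Ck) * min 1 (η / (2 * (1 + Ck))) ≤ (1 + Ck) * (η / (2 * (1 + Ck))) := by
          gcongr
          exact min_le_right _ _
      _ = η / 2 := by field_simp
  obtain ⟨n, hn, hn1, hn2⟩ := ((eventually_ge_atTop (max N 1)).and
    (((hpow (4 * D / (1 - τ))).eventually_le_const (show (0 : ℝ) < ε / 4 by positivity)).and
    ((hpow (Ck * (1 + Ck) * (K * M) * (Ck + 1))).eventually_le_const
      (show (0 : ℝ) < η / 2 by positivity)))).exists
  have hn1' : 1 ≤ n := (le_max_right _ _).trans hn
  obtain ⟨μ, hμ0, hμ⟩ := (hS ((⇑T.symm)^[n] x) n hn1').exists_lower_bound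
  have hcontn : Continuous fun y => A ((⇑T.symm)^[n] y) n :=
    (continuous_cocycle T.continuous hcoc hcont n).comp (T.symm.continuous.iterate n)
  have hnear := Metric.tendsto_nhds.1 (hcontn.tendsto x) (s * μ) (by positivity)
  filter_upwards [hnear] with y hy
  rw [dist_comm, dist_eq_norm] at hy
  by_cases hx0 : 𝓔 x = ⊥
  · rw [dHaus, hx0, subSphere_bot, Metric.hausdorffDist_empty']
    exact hε
  have herr : Ck * (1 + Ck) * (K * M * τ ^ n) * (Ck + s) + (1 + Ck) * s ≤ η := by
    have : Ck * (1 + Ck) * (K * M * τ ^ n) * (Ck + s)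
        ≤ Ck * (1 + Ck) * (K * M) * (Ck + 1) * τ ^ n := by
      calc _ ≤ Ck * (1 + Ck) * (K * M * τ ^ n) * (Ck + 1) := by gcongr
        _ = _ := by ring
    linarith
  have hmid := (hS _ n hn1').dHaus_nearby_le (hS ((⇑T.symm)^[n] y) n hn1') hCk hμ hs0.le hy.le
    (by positivity) (hgap' _ n hn1') (herr.trans hη)
  have h1 := dHaus_triangle (𝓔 y) hx0 ((hS ((⇑T.symm)^[n] x) n hn1').ne_bot hk)
  have h2 := dHaus_triangle (𝓔 y) ((hS ((⇑T.symm)^[n] x) n hn1').ne_bot hk)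
    ((hS ((⇑T.symm)^[n] y) n hn1').ne_bot hk)
  rw [dHaus_comm (𝓔 x) (E' _ n)] at h1
  linarith [hunif x n hn, hunif y n hn]
end

section
/- Let X be a compact topological space, V a Banach space, and B : X × [0,1] → L(V) a map that is continuous in the strong operator topology (i.e. (x,t) ↦ B(x,t)v is continuous for every v ∈ V) and such that every operator B(x,t) is injective. Let k ≥ 1 and let x ↦ 𝓔(x) be a continuous map from X to the k-dimensional subspaces of V (continuous with respect to the Hausdorff metric d_H). Then there exists a constant c > 0 such that m(B(x,t)|_{𝓔(x)}) ≥ c for every x ∈ X and every t ∈ [0,1]. -/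
/-!
By Banach–Steinhaus the operators `B x t`, `(x, t) ∈ X × [0,1]`, are bounded in norm by a common
constant, since each orbit `(x, t) ↦ B x t v` is continuous on a compact set.  By compactness it
then suffices to bound `‖B y s v‖` from below for `(y, s)` near a fixed `(x, t)` and `v` in the unit
sphere of `𝓔 y`.  The unit sphere of `𝓔 x` is compact, so `B x t` is bounded below there by some
`a > 0`; by strong continuity the bound `a / 2` persists for `B y s` on a finite net of this
sphere.  Continuity of `𝓔` puts each unit vector of `𝓔 y` near the sphere of `𝓔 x`, hence near the
net, and the uniform norm bound transfers the estimate (`eventually_lower_bound`).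
-/

open Metric Filter MeasureTheory Topology

lemma subSphere_nonempty_s14 {V : Type*} [NormedAddCommGroup V] [NormedSpace ℝ V]
    {E : Submodule ℝ V} (hE : 0 < Module.finrank ℝ E) : (subSphere E).Nonempty := by
  have : Nontrivial E := Module.nontrivial_of_finrank_pos hE
  obtain ⟨v, hv⟩ := exists_norm_eq E (zero_le_one (α := ℝ))
  exact ⟨v, v.2, hv⟩

lemma isCompact_subSphere {V : Type*} [NormedAddCommGroup V] [NormedSpace ℝ V]
    (E : Submodule ℝ V) [FiniteDimensional ℝ E] : IsCompact (subSphere E) := by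
  have : ProperSpace E := FiniteDimensional.proper ℝ E
  have h := (isCompact_sphere (0 : E) 1).image continuous_subtype_val
  convert h using 1
  ext v
  simp [subSphere, and_comm]

lemma exists_norm_bound {P V : Type*} [TopologicalSpace P]
    [NormedAddCommGroup V] [NormedSpace ℝ V] [CompleteSpace V]
    {K : Set P} (hK : IsCompact K) (B : P → V →L[ℝ] V)
    (hB : ∀ v, ContinuousOn (fun p => B p v) K) :
    ∃ M > 0, ∀ p ∈ K, ‖B p‖ ≤ M := by
  obtain ⟨M, hM⟩ := banach_steinhaus (g := fun p : K => B p) (fun v => by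
    obtain ⟨C, hC⟩ := hK.exists_bound_of_continuousOn (hB v)
    exact ⟨C, fun p => hC p p.2⟩)
  exact ⟨max M 1, by positivity, fun p hp => (hM ⟨p, hp⟩).trans (le_max_left _ _)⟩

/-- The local form of the bound, for a strongly continuous and norm-bounded family over a general
parameter set `K`, at a point `p₀` where the operator is injective. -/
lemma eventually_lower_bound {P V : Type*} [TopologicalSpace P]
    [NormedAddCommGroup V] [NormedSpace ℝ V]
    {K : Set P} (B : P → V →L[ℝ] V) (hB : ∀ v, ContinuousOn (fun p => B p v) K)
    {M : ℝ} (hM0 : 0 < M) (hM : ∀ p ∈ K, ‖B p‖ ≤ M)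
    (E : P → Submodule ℝ V) (hE : ∀ p, FiniteDimensional ℝ (E p))
    (hpos : ∀ p, 0 < Module.finrank ℝ (E p)) (hcont : SubContinuous E)
    {p₀ : P} (hp₀ : p₀ ∈ K) (hinj : Function.Injective (B p₀)) :
    ∃ c > 0, ∀ᶠ p in 𝓝[K] p₀, ∀ v ∈ subSphere (E p), c ≤ ‖B p v‖ := by
  have hS : IsCompact (subSphere (E p₀)) := isCompact_subSphere (E p₀)
  obtain ⟨v₀, hv₀, hmin⟩ := hS.exists_isMinOn (subSphere_nonempty_s14 (hpos p₀))
    (B p₀).continuous.norm.continuousOn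
  have ha : 0 < ‖B p₀ v₀‖ := by
    rw [norm_pos_iff, ne_eq, map_eq_zero_iff _ hinj]
    rintro rfl
    simpa using hv₀.2
  set a := ‖B p₀ v₀‖
  -- An error of `2 * δ` in the vector costs at most `2 * M * δ = a / 4`.
  set δ := a / (8 * M) with hδ
  have hδ0 : 0 < δ := by positivity
  obtain ⟨N, hNS, hN, hcov⟩ := hS.finite_cover_balls hδ0
  refine ⟨a / 4, by positivity, ?_⟩
  have h1 : ∀ᶠ p in 𝓝[K] p₀, ∀ w ∈ N, a / 2 < ‖B p w‖ := by
    rw [hN.eventually_all]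
    intro w hw
    have hlt : a / 2 < ‖B p₀ w‖ := lt_of_lt_of_le (by linarith) (isMinOn_iff.1 hmin w (hNS hw))
    exact ((hB w p₀ hp₀).norm).eventually_const_lt hlt
  filter_upwards [h1, self_mem_nhdsWithin, nhdsWithin_le_nhds (hcont p₀ δ hδ0)]
    with p hp hpK hd v hv
  have hfin : hausdorffEDist (subSphere (E p₀)) (subSphere (E p)) ≠ ⊤ :=
    hausdorffEDist_ne_top_of_nonempty_of_bounded (subSphere_nonempty_s14 (hpos _))
      (subSphere_nonempty_s14 (hpos _)) hS.isBounded
      (isCompact_subSphere (E p)).isBounded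
  obtain ⟨u, hu, huv⟩ := exists_dist_lt_of_hausdorffDist_lt' hv hd hfin
  obtain ⟨w, hw, huw⟩ := Set.mem_iUnion₂.1 (hcov hu)
  have hwv : ‖w - v‖ ≤ 2 * δ := by
    rw [← dist_eq_norm]
    have h := dist_triangle w u v
    rw [mem_ball, dist_comm] at huw
    linarith
  have h2 : ‖B p w - B p v‖ ≤ a / 4 := by
    rw [← map_sub]
    calc ‖B p (w - v)‖ ≤ M * (2 * δ) :=
          ((B p).le_of_opNorm_le (hM p hpK) _).trans (by gcongr)
      _ = a / 4 := by rw [hδ]; field_simp; norm_num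
  have h3 := norm_sub_norm_le (B p w) (B p v)
  linarith [hp w hw]

/-- **Lemma 4.2 (uniform lower bound on the minimal norm for a strongly continuous
family over small times).** -/
theorem uniform_minNorm_lower_bound_small_times
    {X V : Type*} [TopologicalSpace X] [CompactSpace X]
    [NormedAddCommGroup V] [NormedSpace ℝ V] [CompleteSpace V]
    (B : X → ℝ → (V →L[ℝ] V))
    (hB : ∀ v : V, ContinuousOn (fun p : X × ℝ => B p.1 p.2 v)
      (Set.univ ×ˢ Set.Icc (0:ℝ) 1))
    (hinj : ∀ x : X, ∀ t ∈ Set.Icc (0:ℝ) 1, Function.Injective (B x t))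
    (k : ℕ) (hk : 1 ≤ k)
    (𝓔 : X → Submodule ℝ V)
    (h𝓔 : SubContinuous 𝓔)
    (hdim : ∀ x, FiniteDimensional ℝ ↥(𝓔 x) ∧ Module.finrank ℝ ↥(𝓔 x) = k) :
    ∃ c > (0:ℝ), ∀ x : X, ∀ t ∈ Set.Icc (0:ℝ) 1, c ≤ minNorm (B x t) (𝓔 x) := by
  have hK : IsCompact ((Set.univ : Set X) ×ˢ Set.Icc (0:ℝ) 1) := isCompact_univ.prod isCompact_Icc
  set K := (Set.univ : Set X) ×ˢ Set.Icc (0:ℝ) 1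
  obtain ⟨M, hM0, hM⟩ := exists_norm_bound hK (fun p : X × ℝ => B p.1 p.2) hB
  have key : ∃ c > (0:ℝ), ∀ p ∈ K, ∀ v ∈ subSphere (𝓔 p.1), c ≤ ‖B p.1 p.2 v‖ := by
    refine hK.induction_on
      (p := fun s => ∃ c > (0:ℝ), ∀ p ∈ s, ∀ v ∈ subSphere (𝓔 p.1), c ≤ ‖B p.1 p.2 v‖)
      ⟨1, one_pos, by simp⟩ ?_ ?_ ?_
    · rintro s t hst ⟨c, hc, h⟩
      exact ⟨c, hc, fun p hp => h p (hst hp)⟩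
    · rintro s t ⟨c, hc, h⟩ ⟨d, hd, h'⟩
      refine ⟨min c d, lt_min hc hd, ?_⟩
      rintro p (hp | hp) v hv
      · exact (min_le_left _ _).trans (h p hp v hv)
      · exact (min_le_right _ _).trans (h' p hp v hv)
    · intro p hp
      obtain ⟨c, hc, h⟩ := eventually_lower_bound (fun p : X × ℝ => B p.1 p.2) hB hM0 hM
        (fun p => 𝓔 p.1) (fun p => (hdim p.1).1) (fun p => by have := (hdim p.1).2; omega)
        (fun p ε hε => continuous_fst.continuousAt.eventually (h𝓔 p.1 ε hε)) hp
        (hinj p.1 p.2 hp.2)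
      exact ⟨_, h, c, hc, fun q hq => hq⟩
  obtain ⟨c, hc, h⟩ := key
  refine ⟨c, hc, fun x t ht => le_csInf ?_ ?_⟩
  · obtain ⟨v, hv, hv1⟩ := subSphere_nonempty_s14 (E := 𝓔 x) (by have := (hdim x).2; omega)
    exact ⟨_, v, hv, hv1, rfl⟩
  · rintro r ⟨v, hv, hv1, rfl⟩
    exact h (x, t) ⟨trivial, ht⟩ v ⟨hv, hv1⟩
end

section
/- Let B_1, B_2 be invertible k × k real matrices and set m := min{‖B_1^{-1}‖^{-1}, ‖B_2^{-1}‖^{-1}}, where ‖·‖ is the operator norm with respect to the Euclidean norm on ℝ^k. If ‖B_1 − B_2‖ < m, then |log( |det B_2| / |det B_1| )| ≤ k ‖B_1 − B_2‖ / ( m − ‖B_1 − B_2‖ ). -/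
/-!
For an operator `A` of `ℝ^k` one has `|det A| ≤ ‖A‖ ^ k`, because `A` maps the unit ball into the
ball of radius `‖A‖`. Apply this to `B₂ B₁⁻¹ = 1 + (B₂ - B₁) B₁⁻¹`, whose norm is at most
`1 + d / m` with `d = ‖B₁ - B₂‖`: taking logarithms, `log (|det B₂| / |det B₁|) ≤ k d / m`, and
`d / m ≤ d / (m - d)`. Exchanging `B₁` and `B₂` gives the lower bound.
-/

open Metric Filter MeasureTheory Topology

/-- A volume comparison: `A` maps the unit ball into the ball of radius `‖A‖`, and scales volume by
`|det A|`. -/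
lemma abs_det_le_norm_pow {k : ℕ}
    (A : EuclideanSpace ℝ (Fin k) →L[ℝ] EuclideanSpace ℝ (Fin k)) :
    |LinearMap.det A.toLinearMap| ≤ ‖A‖ ^ k := by
  have hsub : A.toLinearMap '' closedBall 0 1 ⊆ closedBall 0 ‖A‖ := by
    rintro _ ⟨x, hx, rfl⟩
    rw [mem_closedBall_zero_iff] at hx ⊢
    exact A.unit_le_opNorm x hx
  have h := measure_mono (μ := (volume : Measure (EuclideanSpace ℝ (Fin k)))) hsub
  rw [Measure.addHaar_image_linearMap,
    Measure.addHaar_closedBall' _ _ (norm_nonneg A), finrank_euclideanSpace_fin] at h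
  have hpos : volume (closedBall (0 : EuclideanSpace ℝ (Fin k)) 1) ≠ 0 :=
    (measure_closedBall_pos _ _ one_pos).ne'
  have htop : volume (closedBall (0 : EuclideanSpace ℝ (Fin k)) 1) ≠ ⊤ :=
    measure_closedBall_lt_top.ne
  rw [ENNReal.mul_le_mul_iff_left hpos htop] at h
  exact (ENNReal.ofReal_le_ofReal_iff (by positivity)).1 h

/-- The one-sided estimate, with the sharper denominator `m`. -/
lemma log_det_div_le {k : ℕ}
    {B₁ B₂ B₁i : EuclideanSpace ℝ (Fin k) →L[ℝ] EuclideanSpace ℝ (Fin k)}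
    (h₁ : B₁.comp B₁i = 1) (hB₂ : LinearMap.det B₂.toLinearMap ≠ 0)
    {m : ℝ} (hm : 0 < m) (hmi : m ≤ ‖B₁i‖⁻¹) :
    Real.log (|LinearMap.det B₂.toLinearMap| / |LinearMap.det B₁.toLinearMap|) ≤
      k * ‖B₁ - B₂‖ / m := by
  have hdet : LinearMap.det B₁.toLinearMap * LinearMap.det B₁i.toLinearMap = 1 := by
    rw [← LinearMap.det_comp, ← ContinuousLinearMap.toLinearMap_comp, h₁]
    exact LinearMap.det_id
  have hd₁ : LinearMap.det B₁.toLinearMap ≠ 0 := left_ne_zero_of_mul_eq_one hdet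
  have hquot : |LinearMap.det B₂.toLinearMap| / |LinearMap.det B₁.toLinearMap| =
      |LinearMap.det (B₂.comp B₁i).toLinearMap| := by
    rw [ContinuousLinearMap.toLinearMap_comp, LinearMap.det_comp, ← abs_div,
      eq_inv_of_mul_eq_one_right hdet, div_eq_mul_inv]
  have hi : ‖B₁i‖ ≤ m⁻¹ := by
    simpa using inv_anti₀ hm hmi
  have hnorm : ‖B₂.comp B₁i‖ ≤ 1 + ‖B₁ - B₂‖ / m := by
    have e : B₂.comp B₁i = 1 - (B₁ - B₂).comp B₁i := by
      rw [ContinuousLinearMap.sub_comp, h₁, sub_sub_cancel]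
    calc ‖B₂.comp B₁i‖ ≤ ‖(1 : EuclideanSpace ℝ (Fin k) →L[ℝ] EuclideanSpace ℝ (Fin k))‖
          + ‖(B₁ - B₂).comp B₁i‖ := e ▸ norm_sub_le _ _
      _ ≤ 1 + ‖B₁ - B₂‖ * ‖B₁i‖ :=
          add_le_add ContinuousLinearMap.norm_id_le (ContinuousLinearMap.opNorm_comp_le _ _)
      _ ≤ 1 + ‖B₁ - B₂‖ / m := by
          rw [div_eq_mul_inv]
          gcongr
  have hpos : 0 < |LinearMap.det B₂.toLinearMap| / |LinearMap.det B₁.toLinearMap| := by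
    positivity
  calc _ ≤ Real.log ((1 + ‖B₁ - B₂‖ / m) ^ k) := by
        refine Real.log_le_log hpos ?_
        rw [hquot]
        exact (abs_det_le_norm_pow _).trans (pow_le_pow_left₀ (norm_nonneg _) hnorm k)
    _ = k * Real.log (1 + ‖B₁ - B₂‖ / m) := Real.log_pow _ _
    _ ≤ k * (‖B₁ - B₂‖ / m) := by
        gcongr
        linarith [Real.log_le_sub_one_of_pos (show 0 < 1 + ‖B₁ - B₂‖ / m by positivity)]
    _ = _ := by ring

/-- **Lemma 5.1 (Lipschitz estimate for `log det` on invertible operators of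
Euclidean space).**  Invertible `k × k` matrices are formalized as continuous
linear automorphisms of `EuclideanSpace ℝ (Fin k)`, with explicit two-sided
inverses; `‖·‖` is the operator norm induced by the Euclidean norm. -/
theorem log_det_lipschitz
    (k : ℕ) (hk : 1 ≤ k)
    (B₁ B₂ B₁i B₂i : EuclideanSpace ℝ (Fin k) →L[ℝ] EuclideanSpace ℝ (Fin k))
    (h₁ : B₁.comp B₁i = 1 ∧ B₁i.comp B₁ = 1)
    (h₂ : B₂.comp B₂i = 1 ∧ B₂i.comp B₂ = 1)
    (hlt : ‖B₁ - B₂‖ < min ‖B₁i‖⁻¹ ‖B₂i‖⁻¹) :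
    |Real.log (|LinearMap.det B₂.toLinearMap| / |LinearMap.det B₁.toLinearMap|)| ≤
      k * ‖B₁ - B₂‖ / (min ‖B₁i‖⁻¹ ‖B₂i‖⁻¹ - ‖B₁ - B₂‖) := by
  have hm : 0 < min ‖B₁i‖⁻¹ ‖B₂i‖⁻¹ := (norm_nonneg _).trans_lt hlt
  have hne {B C : EuclideanSpace ℝ (Fin k) →L[ℝ] EuclideanSpace ℝ (Fin k)}
      (h : B.comp C = 1) : LinearMap.det B.toLinearMap ≠ 0 := by
    apply left_ne_zero_of_mul_eq_one (b := LinearMap.det C.toLinearMap)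
    rw [← LinearMap.det_comp, ← ContinuousLinearMap.toLinearMap_comp, h]
    exact LinearMap.det_id
  have hle : k * ‖B₁ - B₂‖ / min ‖B₁i‖⁻¹ ‖B₂i‖⁻¹ ≤
      k * ‖B₁ - B₂‖ / (min ‖B₁i‖⁻¹ ‖B₂i‖⁻¹ - ‖B₁ - B₂‖) :=
    div_le_div_of_nonneg_left (by positivity) (sub_pos.2 hlt) (sub_le_self _ (norm_nonneg _))
  have hup := log_det_div_le h₁.1 (hne h₂.1) hm (min_le_left _ _)
  have hlow := log_det_div_le h₂.1 (hne h₁.1) hm (min_le_right _ _)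
  rw [← inv_div, Real.log_inv, norm_sub_rev] at hlow
  exact (abs_le.2 ⟨by linarith, hup⟩).trans hle
end
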